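/- There exists ε₀ > 0 such that for all 0 < ε ≤ ε₀ the following hold. (i) If λ ∈ ℝ and u ∈ C²([0,1]) is a nonzero function satisfying φ₂u'' + φ₁u' = λu on [0,1], then ∫_{x₀}^{1−x₀} w(x)|u(x)|² dx > 0 and λ = (∫_{x₀}^{1−x₀} p(x)|u'(x)|² dx)/(∫_{x₀}^{1−x₀} w(x)|u(x)|² dx); in particular λ ≥ 0. (ii) λ = 0 admits a nonzero C²([0,1]) solution, and every C²([0,1]) solution of φ₂u'' + φ₁u' = 0 on [0,1] is constant. -/

import Mathlib

open Real Set Filter Topology MeasureTheory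

/-- The degenerate point `x₀ = (2 − √3)ε`. -/
noncomputable def x0 (ε : ℝ) : ℝ := (2 - Real.sqrt 3) * ε

/-- Leading coefficient `φ₂` of `D_ε` on the interval. -/
noncomputable def phi2 (ε x : ℝ) : ℝ :=
  if x ≤ ε then (1/12) * (1 - 4*(x/ε) + (x/ε)^2)
  else if x ≤ 1 - ε then -(1/6)
  else (1/12) * (1 - 4*((1-x)/ε) + ((1-x)/ε)^2)

/-- First-order coefficient `φ₁` of `D_ε` on the interval. -/
noncomputable def phi1 (ε x : ℝ) : ℝ :=
  if x ≤ ε then -6 * (1 - x/ε) * ((1 + x/ε)^3)⁻¹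
  else if x ≤ 1 - ε then 0
  else 6 * (1 - (1-x)/ε) * ((1 + (1-x)/ε)^3)⁻¹

/-- Integration-factor function `g` on `[0, ε]`. -/
noncomputable def gfun (ε x : ℝ) : ℝ :=
  Real.sign (x - x0 ε) * |x - x0 ε| ^ ((4 + 2*Real.sqrt 3) * ε) *
    |x - 4*ε + x0 ε| ^ ((4 - 2*Real.sqrt 3) * ε) *
    (x + ε) ^ (-(8*ε)) *
    Real.exp (12*ε^3/(ε+x)^2 + 12*ε^2/(ε+x))

/-- Sturm–Liouville principal coefficient `p`. -/
noncomputable def pfun (ε x : ℝ) : ℝ :=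
  if x ≤ ε then gfun ε x / (6 * gfun ε ε)
  else if x ≤ 1 - ε then 1/6
  else gfun ε (1-x) / (6 * gfun ε ε)

/-- Sturm–Liouville weight `w = -p/φ₂`. -/
noncomputable def wfun (ε x : ℝ) : ℝ := -pfun ε x / phi2 ε x

lemma x0_pos {ε : ℝ} (h : 0 < ε) : 0 < x0 ε := by
  have : Real.sqrt 3 < 2 := by
    rw [Real.sqrt_lt' (by norm_num)]; norm_num
  unfold x0; apply mul_pos _ h; linarith

lemma x0_lt {ε : ℝ} (h : 0 < ε) : x0 ε < 3/10 * ε := by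
  have : 1.7 < Real.sqrt 3 := by
    rw [Real.lt_sqrt (by norm_num)]; norm_num
  unfold x0; apply mul_lt_mul_of_pos_right _ h; linarith

lemma x0_sq {ε : ℝ} : x0 ε ^ 2 - 4 * ε * x0 ε + ε^2 = 0 := by
  have : Real.sqrt 3 ^ 2 = 3 := Real.sq_sqrt (by norm_num)
  unfold x0
  linear_combination ε^2 * this

lemma phi2_left {ε x : ℝ} (h : 0 < ε) (hx : x ≤ ε) :
    phi2 ε x = (x0 ε - x) * ((4 * ε - x0 ε - x) / (12 * ε^2)) := by
  have := x0_sq (ε := ε)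
  unfold phi2
  rw [if_pos hx]
  field_simp
  linear_combination this

lemma phi1_left {ε x : ℝ} (h : 0 < ε) (hx : x ≤ ε) (hx0 : 0 ≤ x) :
    phi1 ε x = -6 * ε^2 * (ε - x) / (ε + x)^3 := by
  unfold phi1
  rw [if_pos hx]
  have : ε + x ≠ 0 := by positivity
  have : 1 + x/ε ≠ 0 := by positivity
  field_simp

noncomputable def mm (ε x : ℝ) : ℝ := min ε (min x (1 - x))

lemma phi2_mm {ε x : ℝ} (h : 0 < ε) (h2 : ε < 1/2) :
    phi2 ε x = phi2 ε (mm ε x) := by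
  have e1 : ∀ y, y ≤ ε → phi2 ε y = (1/12) * (1 - 4*(y/ε) + (y/ε)^2) := by
    intro y hy; simp [phi2, hy]
  rw [e1 (mm ε x) (min_le_left _ _)]
  unfold phi2 mm
  split_ifs with h3 h4
  · rw [min_eq_left (by linarith : x ≤ 1 - x), min_eq_right h3]
  · rw [min_eq_left (le_min (by linarith) (by linarith))]
    field_simp; norm_num
  · rw [min_eq_right (by linarith : 1 - x ≤ x), min_eq_right (by linarith)]

noncomputable def qq (ε x : ℝ) : ℝ := 12*ε^3/(ε+x)^2 + 12*ε^2/(ε+x)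

lemma gfun_exp {ε x : ℝ} (h : 0 < ε) (hx : x0 ε < x) (hx' : x ≤ ε) :
    gfun ε x = Real.exp ((4 + 2*Real.sqrt 3) * ε * Real.log (x - x0 ε) +
      (4 - 2*Real.sqrt 3) * ε * Real.log (4 * ε - x0 ε - x) + -(8*ε) * Real.log (x + ε)
      + qq ε x) := by
  have h0 := x0_pos h
  have h1 := x0_lt h
  unfold gfun qq
  rw [Real.sign_of_pos (by linarith), abs_of_pos (by linarith : 0 < x - x0 ε),
    abs_of_neg (by linarith : x - 4*ε + x0 ε < 0),
    Real.rpow_def_of_pos (by linarith), Real.rpow_def_of_pos (by linarith),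
    Real.rpow_def_of_pos (by linarith), one_mul, ← Real.exp_add, ← Real.exp_add, ← Real.exp_add]
  congr 1
  rw [show -(x - 4*ε + x0 ε) = 4 * ε - x0 ε - x by ring]
  ring

lemma gfun_pos {ε x : ℝ} (h : 0 < ε) (hx : x0 ε < x) (hx' : x ≤ ε) : 0 < gfun ε x := by
  rw [gfun_exp h hx hx']; exact Real.exp_pos _

lemma gfun_eps_pos {ε : ℝ} (h : 0 < ε) : 0 < gfun ε ε :=
  gfun_pos h (by linarith [x0_lt h]) le_rfl

lemma gfun_x0 {ε : ℝ} : gfun ε (x0 ε) = 0 := by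
  simp [gfun]

noncomputable def HH (ε x : ℝ) : ℝ :=
  (4 * ε - x0 ε - x) ^ ((4 - 2*Real.sqrt 3) * ε) *
    (x + ε) ^ (-(8*ε)) * Real.exp (12*ε^3/(ε+x)^2 + 12*ε^2/(ε+x))

lemma aa_pos {ε : ℝ} (h : 0 < ε) : 0 < (4 + 2*Real.sqrt 3) * ε := by positivity

lemma gfun_HH {ε x : ℝ} (h : 0 < ε) (hx : x0 ε ≤ x) (hx' : x ≤ ε) :
    gfun ε x = (x - x0 ε) ^ ((4 + 2*Real.sqrt 3) * ε) * HH ε x := by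
  have h1 := x0_pos h
  have h2 := x0_lt h
  rcases hx.eq_or_lt with rfl | hx
  · rw [gfun_x0, sub_self, Real.zero_rpow (aa_pos h).ne', zero_mul]
  · unfold gfun HH
    rw [Real.sign_of_pos (by linarith), abs_of_pos (by linarith : 0 < x - x0 ε),
      abs_of_neg (by linarith : x - 4*ε + x0 ε < 0),
      show -(x - 4*ε + x0 ε) = 4 * ε - x0 ε - x by ring]
    ring

lemma HH_cont {ε : ℝ} (h : 0 < ε) : ContinuousOn (HH ε) (Icc (x0 ε) ε) := by
  have h1 := x0_pos h
  have h2 := x0_lt h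
  unfold HH
  refine ((ContinuousOn.rpow_const (by fun_prop) ?_).mul
    (ContinuousOn.rpow_const (by fun_prop) ?_)).mul (ContinuousOn.rexp (ContinuousOn.add
    (ContinuousOn.div (by fun_prop) (by fun_prop) ?_)
    (ContinuousOn.div (by fun_prop) (by fun_prop) ?_)))
  · rintro x ⟨a, b⟩; left; linarith
  · rintro x ⟨a, b⟩; left; linarith
  · rintro x ⟨a, b⟩; have : 0 < ε + x := by linarith
    positivity
  · rintro x ⟨a, b⟩; have : 0 < ε + x := by linarith
    positivity

lemma gfun_cont {ε : ℝ} (h : 0 < ε) : ContinuousOn (gfun ε) (Icc (x0 ε) ε) := by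
  refine ContinuousOn.congr (f := fun x => (x - x0 ε) ^ ((4 + 2*Real.sqrt 3) * ε) * HH ε x) ?_
    (fun x hx => gfun_HH h hx.1 hx.2)
  exact (ContinuousOn.rpow_const (by fun_prop) (fun x _ => Or.inr (aa_pos h).le)).mul (HH_cont h)

lemma pfun_mm {ε x : ℝ} (h : 0 < ε) (h2 : ε < 1/2) :
    pfun ε x = gfun ε (mm ε x) / (6 * gfun ε ε) := by
  have := gfun_eps_pos h
  unfold pfun mm
  split_ifs with h3 h4
  · rw [min_eq_left (by linarith : x ≤ 1 - x), min_eq_right h3]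
  · rw [min_eq_left (le_min (by linarith) (by linarith))]
    field_simp
  · rw [min_eq_right (by linarith : 1 - x ≤ x), min_eq_right (by linarith)]

lemma mm_symm (ε x : ℝ) : mm ε (1 - x) = mm ε x := by
  unfold mm; rw [sub_sub_cancel, min_comm x]

lemma mm_cont (ε : ℝ) : Continuous (mm ε) := by unfold mm; fun_prop

lemma mm_mem {ε x : ℝ} (h : 0 < ε) (hx : x ∈ Icc (x0 ε) (1 - x0 ε)) :
    mm ε x ∈ Icc (x0 ε) ε := by
  have h2 := x0_lt h
  exact ⟨le_min (by linarith) (le_min hx.1 (by linarith [hx.2])), min_le_left _ _⟩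

lemma mm_mem' {ε x : ℝ} (h : 0 < ε) (hx : x ∈ Ioo (x0 ε) (1 - x0 ε)) :
    mm ε x ∈ Ioc (x0 ε) ε := by
  have h2 := x0_lt h
  exact ⟨lt_min (by linarith) (lt_min hx.1 (by linarith [hx.2])), min_le_left _ _⟩

lemma pfun_cont {ε : ℝ} (h : 0 < ε) (h2 : ε < 1/2) :
    ContinuousOn (pfun ε) (Icc (x0 ε) (1 - x0 ε)) := by
  refine ContinuousOn.congr (f := fun x => gfun ε (mm ε x) / (6 * gfun ε ε)) ?_
    (fun x _ => pfun_mm h h2)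
  exact ((gfun_cont h).comp (mm_cont ε).continuousOn (fun x hx => mm_mem h hx)).div_const _

lemma phi2_cont {ε : ℝ} (h : 0 < ε) (h2 : ε < 1/2) : Continuous (phi2 ε) := by
  have : phi2 ε = fun x => (x0 ε - mm ε x) * ((4 * ε - x0 ε - mm ε x) / (12 * ε^2)) := by
    ext x; rw [phi2_mm h h2, phi2_left h (show mm ε x ≤ ε from min_le_left _ _)]
  rw [this]
  have := mm_cont ε
  fun_prop

lemma phi2_neg {ε x : ℝ} (h : 0 < ε) (h2 : ε < 1/2) (hx : x ∈ Ioo (x0 ε) (1 - x0 ε)) :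
    phi2 ε x < 0 := by
  have h3 := x0_lt h
  obtain ⟨a, b⟩ := mm_mem' h hx
  rw [phi2_mm h h2, phi2_left h b]
  apply mul_neg_of_neg_of_pos (by linarith)
  apply div_pos (by linarith) (by positivity)

lemma pfun_pos {ε x : ℝ} (h : 0 < ε) (h2 : ε < 1/2) (hx : x ∈ Ioo (x0 ε) (1 - x0 ε)) :
    0 < pfun ε x := by
  obtain ⟨a, b⟩ := mm_mem' h hx
  rw [pfun_mm h h2]
  have := gfun_eps_pos h
  have := gfun_pos h a b
  positivity

lemma wfun_pos {ε x : ℝ} (h : 0 < ε) (h2 : ε < 1/2) (hx : x ∈ Ioo (x0 ε) (1 - x0 ε)) :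
    0 < wfun ε x := by
  unfold wfun
  exact div_pos_of_neg_of_neg (by linarith [pfun_pos h h2 hx]) (phi2_neg h h2 hx)

lemma wfun_cont {ε : ℝ} (h : 0 < ε) (h2 : ε < 1/2) :
    ContinuousOn (wfun ε) (Ioo (x0 ε) (1 - x0 ε)) := by
  unfold wfun
  exact ((pfun_cont h h2).mono Ioo_subset_Icc_self).neg.div (phi2_cont h h2).continuousOn
    (fun x hx => (phi2_neg h h2 hx).ne)

lemma wfun_symm {ε x : ℝ} (h : 0 < ε) (h2 : ε < 1/2) : wfun ε (1 - x) = wfun ε x := by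
  unfold wfun
  rw [pfun_mm h h2, phi2_mm h h2, mm_symm, ← pfun_mm h h2, ← phi2_mm h h2]

lemma wfun_int_left {ε : ℝ} (h : 0 < ε) :
    IntervalIntegrable (wfun ε) volume (x0 ε) ε := by
  have h3 := x0_lt h
  have hg := gfun_eps_pos h
  have i1 : IntervalIntegrable (fun x => (x - x0 ε) ^ ((4 + 2*Real.sqrt 3) * ε - 1)) volume
      (x0 ε) ε := by
    have := (intervalIntegral.intervalIntegrable_rpow' (a := 0) (b := ε - x0 ε)
      (r := (4 + 2*Real.sqrt 3) * ε - 1) (by linarith [aa_pos h])).comp_sub_right (x0 ε)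
    simpa using this
  have i2 := i1.mul_continuousOn (g := fun x => HH ε x * (12 * ε^2) / (6 * gfun ε ε) /
    (4 * ε - x0 ε - x)) (by
      rw [uIcc_of_le (by linarith)]
      refine (((HH_cont h).mul continuousOn_const).div_const _).div (by fun_prop) ?_
      rintro x ⟨a, b⟩
      have : 0 < 4 * ε - x0 ε - x := by linarith
      exact this.ne')
  refine i2.congr ?_
  rw [uIoc_of_le (by linarith)]
  rintro x ⟨a, b⟩
  have e1 : 0 < x - x0 ε := by linarith
  have e1' : x0 ε - x ≠ 0 := by linarith
  have e2 : 0 < 4 * ε - x0 ε - x := by linarith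
  simp only [wfun]
  rw [phi2_left h b, pfun, if_pos b, gfun_HH h a.le b, Real.rpow_sub_one e1.ne']
  rw [show x0 ε - x = -(x - x0 ε) by ring]
  field_simp

lemma wfun_int {ε : ℝ} (h : 0 < ε) (h2 : ε < 1/2) :
    IntervalIntegrable (wfun ε) volume (x0 ε) (1 - x0 ε) := by
  have h3 := x0_lt h
  have h4 := x0_pos h
  have i1 := wfun_int_left h
  have i3 : IntervalIntegrable (wfun ε) volume (1 - ε) (1 - x0 ε) := by
    have := (i1.comp_sub_left 1).symm
    refine this.congr ?_
    intro x _
    exact wfun_symm h h2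
  have i2 : IntervalIntegrable (wfun ε) volume ε (1 - ε) := by
    apply ContinuousOn.intervalIntegrable
    apply (wfun_cont h h2).mono
    rw [uIcc_of_le (by linarith)]
    rintro x ⟨a, b⟩
    constructor <;> linarith
  exact (i1.trans i2).trans i3

lemma gfun_deriv {ε x : ℝ} (h : 0 < ε) (hx : x0 ε < x) (hx' : x < ε) :
    HasDerivAt (gfun ε) (gfun ε x * (phi1 ε x / phi2 ε x)) x := by
  have h3 := x0_lt h
  have h4 := x0_pos h
  have e1 : x - x0 ε ≠ 0 := by linarith
  have e1' : x0 ε - x ≠ 0 := by linarith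
  have e2 : 4 * ε - x0 ε - x ≠ 0 := by linarith
  have e3 : x + ε ≠ 0 := by linarith
  have e3' : ε + x ≠ 0 := by linarith
  have ev : gfun ε =ᶠ[𝓝 x] fun x => Real.exp ((4 + 2*Real.sqrt 3) * ε * Real.log (x - x0 ε) +
      (4 - 2*Real.sqrt 3) * ε * Real.log (4 * ε - x0 ε - x) + -(8*ε) * Real.log (x + ε)
      + qq ε x) := by
    filter_upwards [Ioo_mem_nhds hx hx'] with y hy
    exact gfun_exp h hy.1 hy.2.le
  have dq : HasDerivAt (qq ε) (-(24 * ε^3)/(ε + x)^3 - 12*ε^2/(ε+x)^2) x := by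
    unfold qq
    have d1 : HasDerivAt (fun x => ε + x) 1 x := (hasDerivAt_id x).const_add ε
    have := ((hasDerivAt_const x (12*ε^3)).div (d1.pow 2) (pow_ne_zero 2 e3')).add
      ((hasDerivAt_const x (12*ε^2)).div d1 e3')
    refine this.congr_deriv ?_
    simp only [Pi.pow_apply]
    field_simp
    ring
  have l1 : HasDerivAt (fun x => Real.log (x - x0 ε)) (1 / (x - x0 ε)) x :=
    ((hasDerivAt_id x).sub_const _).log e1
  have l2 : HasDerivAt (fun x => Real.log (4 * ε - x0 ε - x)) (-1 / (4 * ε - x0 ε - x)) x :=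
    ((hasDerivAt_id x).const_sub _).log e2
  have l3 : HasDerivAt (fun x => Real.log (x + ε)) (1 / (x + ε)) x :=
    ((hasDerivAt_id x).add_const _).log e3
  have := ((((l1.const_mul ((4 + 2*Real.sqrt 3) * ε)).add
    (l2.const_mul ((4 - 2*Real.sqrt 3) * ε))).add (l3.const_mul (-(8*ε)))).add dq).exp
  refine HasDerivAt.congr_of_eventuallyEq ?_ ev
  refine this.congr_deriv ?_
  rw [gfun_exp h hx hx'.le]
  simp only [Pi.add_apply]
  congr 1
  obtain ⟨D, hDd⟩ : ∃ D, D = x^2 - 4 * ε * x + ε^2 := ⟨_, rfl⟩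
  have hD : (x0 ε - x) * (4 * ε - x0 ε - x) = D := by
    rw [hDd]
    linear_combination - x0_sq (ε := ε)
  have hD0 : D ≠ 0 := by
    rw [← hD]; exact mul_ne_zero e1' e2
  have key : (4 + 2*Real.sqrt 3) * ε * (1 / (x - x0 ε)) +
    (4 - 2*Real.sqrt 3) * ε * (-1 / (4 * ε - x0 ε - x)) =
      (8 * ε * x - 28 * ε^2) / D := by
    rw [show D = (x - x0 ε) * (4 * ε - x0 ε - x) * (-1) by
      linear_combination - hD]
    have s3 : Real.sqrt 3 ^ 2 = 3 := Real.sq_sqrt (by norm_num)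
    field_simp
    unfold x0
    linear_combination (4 * ε) * s3
  rw [key, phi2_left h hx'.le, phi1_left h hx'.le (by linarith)]
  rw [show (x0 ε - x) * ((4 * ε - x0 ε - x) / (12 * ε ^ 2)) =
    D / (12 * ε^2) by rw [← hD]; ring]
  rw [show x + ε = ε + x by ring]
  field_simp
  rw [hDd]
  ring

lemma phi_right {ε x : ℝ} (h : 0 < ε) (h2 : ε < 1/2) :
    phi2 ε (1 - x) = phi2 ε x ∧ phi1 ε (1 - x) = - phi1 ε x := by
  constructor
  · rw [phi2_mm h h2, mm_symm, ← phi2_mm h h2]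
  · unfold phi1
    rw [sub_sub_cancel]
    rcases lt_trichotomy x ε with h3 | h3 | h3
    · rw [if_neg (by linarith), if_neg (by linarith), if_pos h3.le]; ring
    · subst h3
      rw [if_neg (by linarith), if_pos le_rfl, if_pos le_rfl, div_self h.ne']; ring
    · rcases lt_trichotomy x (1 - ε) with h4 | h4 | h4
      · rw [if_neg (by linarith), if_pos (by linarith), if_neg (by linarith), if_pos (by linarith)]
        ring
      · subst h4
        rw [if_pos (by linarith), if_neg (by linarith), if_pos (by linarith), sub_sub_cancel,
          div_self h.ne']
        ring
      · rw [if_pos (by linarith), if_neg (by linarith), if_neg (by linarith)]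
        ring

lemma pfun_deriv {ε x : ℝ} (h : 0 < ε) (h2 : ε < 1/2) (hx : x ∈ Ioo (x0 ε) (1 - x0 ε))
    (h3 : x ≠ ε) (h4 : x ≠ 1 - ε) :
    HasDerivAt (pfun ε) (pfun ε x * (phi1 ε x / phi2 ε x)) x := by
  rcases lt_or_gt_of_ne h3 with h3 | h3
  · have ev : pfun ε =ᶠ[𝓝 x] fun x => gfun ε x / (6 * gfun ε ε) := by
      filter_upwards [Iio_mem_nhds h3] with y hy
      simp only [pfun, if_pos (le_of_lt (show y < ε from hy))]
    refine HasDerivAt.congr_of_eventuallyEq ?_ ev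
    refine ((gfun_deriv h hx.1 h3).div_const _).congr_deriv ?_
    rw [ev.eq_of_nhds]; ring
  rcases lt_or_gt_of_ne h4 with h4 | h4
  · have ev : pfun ε =ᶠ[𝓝 x] fun x => 1/6 := by
      filter_upwards [Ioo_mem_nhds h3 h4] with y hy
      simp only [pfun, if_neg (not_le.2 hy.1), if_pos hy.2.le]
    refine HasDerivAt.congr_of_eventuallyEq ?_ ev
    refine (hasDerivAt_const x (1/6 : ℝ)).congr_deriv ?_
    rw [phi1, if_neg (by linarith), if_pos h4.le]; ring
  · have ev : pfun ε =ᶠ[𝓝 x] fun x => gfun ε (1 - x) / (6 * gfun ε ε) := by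
      filter_upwards [Ioi_mem_nhds h4] with y hy
      have hy : 1 - ε < y := hy
      simp only [pfun]
      rw [if_neg (by linarith), if_neg (by linarith)]
    refine HasDerivAt.congr_of_eventuallyEq ?_ ev
    have := (gfun_deriv h (x := 1 - x) (by linarith [hx.2]) (by linarith)).comp_const_sub 1 x
    refine (this.div_const _).congr_deriv ?_
    rw [ev.eq_of_nhds, (phi_right h h2).1, (phi_right h h2).2]; ring

lemma int_pos {a b z : ℝ} {f : ℝ → ℝ} (hz : z ∈ Ioo a b) (hc : ContinuousOn f (Ioo a b))
    (hi : IntervalIntegrable f volume a b) (hn : ∀ x ∈ Ioo a b, 0 ≤ f x) (hp : 0 < f z) :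
    0 < ∫ x in a..b, f x := by
  obtain ⟨hz1, hz2⟩ := hz
  have e : ∀ x, x ∈ Icc ((a + z)/2) ((z+b)/2) → x ∈ Ioo a b := by
    rintro x ⟨h1, h2⟩; constructor <;> linarith
  have : 0 < ∫ x in ((a+z)/2)..((z+b)/2), f x := by
    apply intervalIntegral.integral_pos (by linarith) (hc.mono e)
    · intro x hx; exact hn x (e x ⟨hx.1.le, hx.2⟩)
    · exact ⟨z, ⟨by linarith, by linarith⟩, hp⟩
  refine this.trans_le ?_
  refine intervalIntegral.integral_mono_interval (by linarith) (by linarith) (by linarith) ?_ hi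
  rw [Filter.EventuallyLE, ae_restrict_iff' measurableSet_Ioc]
  have hb : ∀ᵐ x : ℝ, x ≠ b := by simp [ae_iff]
  filter_upwards [hb] with x hx hx'
  exact hn x ⟨hx'.1, lt_of_le_of_ne hx'.2 hx⟩

/-- bundled hypothesis -/
def Sol (ε lam : ℝ) (u u' u'' : ℝ → ℝ) : Prop :=
  (∀ x ∈ Icc (0:ℝ) 1, HasDerivAt u (u' x) x) ∧
  (∀ x ∈ Icc (0:ℝ) 1, HasDerivAt u' (u'' x) x) ∧
  (∀ x ∈ Icc (0:ℝ) 1, phi2 ε x * u'' x + phi1 ε x * u' x = lam * u x)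

lemma Sol.refl {ε lam : ℝ} {u u' u'' : ℝ → ℝ} (h : 0 < ε) (h2 : ε < 1/2)
    (hs : Sol ε lam u u' u'') :
    Sol ε lam (fun x => u (1 - x)) (fun x => - u' (1 - x)) (fun x => u'' (1 - x)) := by
  have e : ∀ x ∈ Icc (0:ℝ) 1, 1 - x ∈ Icc (0:ℝ) 1 := by
    rintro x ⟨a, b⟩; constructor <;> linarith
  refine ⟨fun x hx => (hs.1 _ (e x hx)).comp_const_sub 1 x, fun x hx => ?_, fun x hx => ?_⟩
  · exact ((hs.2.1 _ (e x hx)).comp_const_sub 1 x).neg.congr_deriv (neg_neg _)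
  · have := hs.2.2 _ (e x hx)
    rw [(phi_right h h2).1, (phi_right h h2).2] at this
    linarith

lemma Sol.ident {ε lam : ℝ} {u u' u'' : ℝ → ℝ} (h : 0 < ε) (h2 : ε < 1/2)
    (hs : Sol ε lam u u' u'') :
    IntervalIntegrable (fun x => wfun ε x * (u x)^2) volume (x0 ε) (1 - x0 ε) ∧
    IntervalIntegrable (fun x => pfun ε x * (u' x)^2) volume (x0 ε) (1 - x0 ε) ∧
    ∫ x in (x0 ε)..(1 - x0 ε), pfun ε x * (u' x)^2 =
      lam * ∫ x in (x0 ε)..(1 - x0 ε), wfun ε x * (u x)^2 := by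
  have h3 := x0_lt h
  have h4 := x0_pos h
  have hle : x0 ε ≤ 1 - x0 ε := by linarith
  have sub : Icc (x0 ε) (1 - x0 ε) ⊆ Icc 0 1 := by
    rintro x ⟨a, b⟩; constructor <;> linarith
  have cu : ContinuousOn u (Icc (x0 ε) (1 - x0 ε)) :=
    fun x hx => (hs.1 x (sub hx)).continuousAt.continuousWithinAt
  have cu' : ContinuousOn u' (Icc (x0 ε) (1 - x0 ε)) :=
    fun x hx => (hs.2.1 x (sub hx)).continuousAt.continuousWithinAt
  have i1 : IntervalIntegrable (fun x => wfun ε x * (u x)^2) volume (x0 ε) (1 - x0 ε) := by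
    apply (wfun_int h h2).mul_continuousOn
    rw [uIcc_of_le hle]; exact cu.pow 2
  have i2 : IntervalIntegrable (fun x => pfun ε x * (u' x)^2) volume (x0 ε) (1 - x0 ε) := by
    apply ContinuousOn.intervalIntegrable
    rw [uIcc_of_le hle]; exact (pfun_cont h h2).mul (cu'.pow 2)
  refine ⟨i1, i2, ?_⟩
  have := MeasureTheory.integral_eq_of_hasDerivAt_off_countable_of_le
    (fun x => pfun ε x * (u' x * u x))
    (fun x => pfun ε x * (u' x)^2 - lam * (wfun ε x * (u x)^2)) hle
    (s := {ε, 1 - ε}) (Set.Finite.countable (by simp))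
    ((pfun_cont h h2).mul (cu'.mul cu)) ?_ (i2.sub (i1.const_mul lam))
  · have p1 : pfun ε (x0 ε) = 0 := by
      rw [pfun, if_pos (by linarith), gfun_x0, zero_div]
    have p2 : pfun ε (1 - x0 ε) = 0 := by
      rw [pfun_mm h h2, mm_symm, ← pfun_mm h h2, p1]
    rw [intervalIntegral.integral_sub i2 (i1.const_mul lam),
      intervalIntegral.integral_const_mul, p1, p2] at this
    linarith
  · rintro x ⟨hx, hx2⟩
    have hx3 : x ≠ ε := fun h => hx2 (by simp [h])
    have hx4 : x ≠ 1 - ε := fun h => hx2 (by simp [h])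
    have hxx := sub (Ioo_subset_Icc_self hx)
    refine ((pfun_deriv h h2 hx hx3 hx4).mul ((hs.2.1 x hxx).mul (hs.1 x hxx))).congr_deriv ?_
    have hq := (phi2_neg h h2 hx).ne
    have e : u'' x = (lam * u x - phi1 ε x * u' x) / phi2 ε x := by
      rw [eq_div_iff hq]; linarith [hs.2.2 x hxx]
    simp only [Pi.mul_apply]
    rw [e, wfun]
    field_simp
    ring

lemma uc_alg {ε lam m φ a q y K : ℝ} (h : 0 < ε) (hy : 0 ≤ y) (m0 : 1 ≤ 4 * ε * m)
    (m1 : 3 * ε * m ≤ 1) (mpos : 0 < m) (hphi : φ ≤ -1)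
    (hK : K = 4 * ε * |lam| * (1 + 1 / (3 * ε))) :
    0 ≤ y * (m * K * (a^2 + 3 * ε * q^2) - 2 * lam * (q * a)) +
      (2 * (-φ) * a^2 - 2 * (3 * ε * m) * (q * (a - q))) := by
  apply add_nonneg
  · apply mul_nonneg hy
    have a1 : |lam| * (1 + 1/(3*ε)) ≤ m * K := by
      have : 0 ≤ |lam| * (1 + 1/(3*ε)) := by positivity
      rw [hK]; nlinarith
    have a2 : |lam| * (1 + 1/(3*ε)) * (a^2 + 3 * ε * q^2) ≤ m * K * (a^2 + 3 * ε * q^2) := by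
      apply mul_le_mul_of_nonneg_right a1
      positivity
    have a3 : (a)^2 + (q)^2 ≤ (1 + 1/(3*ε)) * (a^2 + 3 * ε * q^2) := by
      have : (1 + 1/(3*ε)) * (a^2 + 3 * ε * q^2) = (a)^2 + (q)^2 + 3 * ε * (q)^2
        + 1/(3*ε) * (a)^2 := by
        field_simp; ring
      rw [this]
      have : 0 ≤ 3 * ε * (q)^2 := by positivity
      have : 0 ≤ 1/(3*ε) * (a)^2 := by positivity
      linarith
    have a4 : |lam| * ((a)^2 + (q)^2) ≤ |lam| * ((1 + 1/(3*ε)) * (a^2 + 3 * ε * q^2)) :=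
      mul_le_mul_of_nonneg_left a3 (abs_nonneg _)
    have a5 : 2 * lam * (q * a) ≤ |lam| * ((a)^2 + (q)^2) := by
      rcases abs_cases lam with ⟨e, _⟩ | ⟨e, _⟩ <;> rw [e]
      · nlinarith [sq_nonneg (a - q)]
      · nlinarith [sq_nonneg (a + q)]
    linarith
  · have b1 : (a)^2 ≤ -φ * (a)^2 := by nlinarith [sq_nonneg (a)]
    have b0 : 0 ≤ 3 * ε * m := by positivity
    have b2 : (3 * ε * m) * (q * (a - q)) ≤ (3 * ε * m) * (a)^2 := by
      apply mul_le_mul_of_nonneg_left _ b0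
      nlinarith [sq_nonneg (a - q), sq_nonneg (a), sq_nonneg (q)]
    have b3 : (3 * ε * m) * (a)^2 ≤ (a)^2 := by nlinarith [sq_nonneg (a)]
    linarith

lemma Sol.uc {ε lam : ℝ} {u u' u'' : ℝ → ℝ} (h : 0 < ε) (h2 : ε < 1/2)
    (hs : Sol ε lam u u' u'') (hu : u (x0 ε) = 0) (hu' : u' (x0 ε) = 0) :
    ∀ x ∈ Icc 0 (x0 ε), u x = 0 := by
  have h3 := x0_lt h
  have h4 := x0_pos h
  have sub : Icc 0 (x0 ε) ⊆ Icc (0:ℝ) 1 := by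
    rintro x ⟨a, b⟩; constructor <;> linarith
  set q : ℝ → ℝ := fun x => u x / (x - x0 ε) with hq
  have cq0 : ContinuousAt q (x0 ε) := by
    rw [continuousAt_iff_punctured_nhds]
    have := hasDerivAt_iff_tendsto_slope.1 (hs.1 _ (sub ⟨h4.le, le_rfl⟩))
    have e : q (x0 ε) = 0 := by simp [hq]
    rw [e, ← hu']
    refine this.congr ?_
    intro x
    rw [slope_def_field, hu, sub_zero]
  have dq : ∀ x ∈ Ico 0 (x0 ε), HasDerivAt q ((u' x - q x) / (x - x0 ε)) x := by
    intro x hx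
    have ne : x - x0 ε ≠ 0 := by linarith [hx.2]
    have := (hs.1 x (sub ⟨hx.1, hx.2.le⟩)).div ((hasDerivAt_id x).sub_const (x0 ε)) ne
    refine this.congr_deriv ?_
    simp only [hq, id]
    field_simp
  set K : ℝ := 4 * ε * |lam| * (1 + 1 / (3 * ε)) with hK
  set F : ℝ → ℝ := fun x => (u' x)^2 + 3 * ε * (q x)^2 with hF
  have cF : ContinuousOn (fun x => Real.exp (K * x) * F x) (Icc 0 (x0 ε)) := by
    have c1 : ContinuousOn u' (Icc 0 (x0 ε)) :=
      fun x hx => (hs.2.1 x (sub hx)).continuousAt.continuousWithinAt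
    have c2 : ContinuousOn q (Icc 0 (x0 ε)) := by
      intro x hx
      rcases hx.2.eq_or_lt with rfl | hlt
      · exact cq0.continuousWithinAt
      · exact (dq x ⟨hx.1, hlt⟩).continuousAt.continuousWithinAt
    fun_prop
  have dF : ∀ x ∈ Ioo 0 (x0 ε), HasDerivAt (fun x => Real.exp (K * x) * F x)
      (Real.exp (K * x) * (K * F x + (2 * u' x * u'' x +
        6 * ε * q x * ((u' x - q x) / (x - x0 ε))))) x := by
    intro x hx
    have d1 := ((hs.2.1 x (sub ⟨hx.1.le, hx.2.le⟩)).pow 2).add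
      (((dq x ⟨hx.1.le, hx.2⟩).pow 2).const_mul (3 * ε))
    have d2 : HasDerivAt (fun x => Real.exp (K * x)) (Real.exp (K * x) * (K * 1)) x :=
      ((hasDerivAt_id x).const_mul K).exp
    refine (d2.mul d1).congr_deriv ?_
    simp [hF]
    ring
  have mono : MonotoneOn (fun x => Real.exp (K * x) * F x) (Icc 0 (x0 ε)) := by
    apply monotoneOn_of_deriv_nonneg (convex_Icc _ _) cF
    · rw [interior_Icc]
      exact fun x hx => (dF x hx).differentiableAt.differentiableWithinAt
    · rw [interior_Icc]
      intro x hx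
      rw [(dF x hx).deriv]
      apply mul_nonneg (Real.exp_pos _).le
      have hxx := sub ⟨hx.1.le, hx.2.le⟩
      have heq := hs.2.2 x hxx
      have hy : 0 < x0 ε - x := by linarith [hx.2]
      have hxe : x ≤ ε := by linarith [hx.2]
      rw [phi2_left h hxe] at heq
      have hphi : phi1 ε x ≤ -1 := by
        rw [phi1_left h hxe hx.1.le]
        have : 0 < ε + x := by linarith [hx.1]
        rw [div_le_iff₀ (by positivity)]
        have t1 : (ε + x)^3 ≤ (13/10 * ε)^3 := by
          gcongr; linarith [hx.2]
        have t2 : 6 * ε^2 * (ε - 3/10 * ε) ≤ 6 * ε^2 * (ε - x) := by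
          gcongr; linarith [hx.2]
        have : 0 < ε^3 := by positivity
        nlinarith
      set m : ℝ := (4 * ε - x0 ε - x) / (12 * ε^2) with hm
      have m0 : 1 ≤ 4 * ε * m := by
        rw [hm, ← mul_div_assoc, le_div_iff₀ (by positivity)]
        nlinarith [hx.2]
      have m1 : 3 * ε * m ≤ 1 := by
        rw [hm, ← mul_div_assoc, div_le_iff₀ (by positivity)]
        nlinarith [hx.1]
      have mpos : 0 < m := by
        by_contra hc
        have : ε * m ≤ 0 := mul_nonpos_of_nonneg_of_nonpos h.le (not_lt.1 hc)
        linarith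
      have uq : u x = - (q x * (x0 ε - x)) := by
        have : x - x0 ε ≠ 0 := by linarith
        simp only [hq]; field_simp; ring
      have key : 0 ≤ ((x0 ε - x) * m) * (K * F x + (2 * u' x * u'' x +
        6 * ε * q x * ((u' x - q x) / (x - x0 ε)))) := by
        have e1 : ((x0 ε - x) * m) * (K * F x + (2 * u' x * u'' x +
          6 * ε * q x * ((u' x - q x) / (x - x0 ε)))) =
          (x0 ε - x) * (m * K * F x - 2 * lam * (q x * u' x)) +
          (2 * (- phi1 ε x) * (u' x)^2 - 2 * (3 * ε * m) * (q x * (u' x - q x))) := by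
          have e2 : (u' x - q x) / (x - x0 ε) = - ((u' x - q x) / (x0 ε - x)) := by
            rw [← neg_sub (x0 ε) x, div_neg]
          rw [e2]
          have e3 : (x0 ε - x) * ((u' x - q x) / (x0 ε - x)) = u' x - q x := by
            field_simp
          rw [uq] at heq
          linear_combination 2 * u' x * heq - (m * 6 * ε * q x) * e3
        rw [e1]
        exact uc_alg h hy.le m0 m1 mpos hphi hK
      exact nonneg_of_mul_nonneg_right key (mul_pos hy mpos)
  intro x hx
  rcases hx.2.eq_or_lt with rfl | hlt
  · exact hu
  have := mono hx ⟨h4.le, le_rfl⟩ hx.2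
  have e0 : F (x0 ε) = 0 := by simp [hF, hq, hu']
  simp only [e0, mul_zero] at this
  have hF0 : F x ≤ 0 := by
    by_contra hc
    have := mul_pos (Real.exp_pos (K * x)) (not_le.1 hc)
    linarith
  have hq0 : (q x)^2 ≤ 0 := by
    simp only [hF] at hF0
    by_contra hc
    have := mul_pos (show 0 < 3 * ε by linarith) (not_le.1 hc)
    nlinarith [sq_nonneg (u' x)]
  have : q x = 0 := by
    have := le_antisymm hq0 (sq_nonneg _)
    exact pow_eq_zero_iff (two_ne_zero) |>.1 this
  have ne : x - x0 ε ≠ 0 := by linarith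
  simpa [hq, ne] using this

lemma Sol.zero {ε lam : ℝ} {u u' u'' : ℝ → ℝ} (h : 0 < ε) (h2 : ε < 1/2)
    (hs : Sol ε lam u u' u'') (hu : ∀ x ∈ Ioo (x0 ε) (1 - x0 ε), u x = 0) :
    ∀ x ∈ Icc (0:ℝ) 1, u x = 0 := by
  have h3 := x0_lt h
  have h4 := x0_pos h
  have hlt : x0 ε < 1 - x0 ε := by linarith
  have A : ∀ v v' v'' : ℝ → ℝ, Sol ε lam v v' v'' → (∀ x ∈ Ioo (x0 ε) (1 - x0 ε), v x = 0) →
      ∀ x ∈ Icc 0 (x0 ε), v x = 0 := by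
    intro v v' v'' hv hz
    have m0 : x0 ε ∈ Icc (0:ℝ) 1 := ⟨h4.le, by linarith⟩
    have hz' : ∀ x ∈ Ioo (x0 ε) (1 - x0 ε), v' x = 0 := by
      intro x hx
      have ev : v =ᶠ[𝓝 x] fun _ => (0:ℝ) := by
        filter_upwards [Ioo_mem_nhds hx.1 hx.2] with y hy using hz y hy
      exact (hv.1 x ⟨by linarith [hx.1], by linarith [hx.2]⟩).unique
        ((hasDerivAt_const x (0:ℝ)).congr_of_eventuallyEq ev)
    have B : ∀ f : ℝ → ℝ, ContinuousAt f (x0 ε) → (∀ x ∈ Ioo (x0 ε) (1 - x0 ε), f x = 0) →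
        f (x0 ε) = 0 := by
      intro f hf hf0
      have t1 : Tendsto f (𝓝[>] (x0 ε)) (𝓝 (f (x0 ε))) := hf.mono_left nhdsWithin_le_nhds
      have t2 : Tendsto f (𝓝[>] (x0 ε)) (𝓝 0) := by
        apply tendsto_const_nhds.congr'
        filter_upwards [Ioo_mem_nhdsGT hlt] with y hy using (hf0 y hy).symm
      exact tendsto_nhds_unique t1 t2
    exact hv.uc h h2 (B v (hv.1 _ m0).continuousAt hz) (B v' (hv.2.1 _ m0).continuousAt hz')
  intro x hx
  rcases le_or_gt x (x0 ε) with a | a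
  · exact A u u' u'' hs hu x ⟨hx.1, a⟩
  rcases lt_or_ge x (1 - x0 ε) with b | b
  · exact hu x ⟨a, b⟩
  · have := A _ _ _ (hs.refl h h2) (fun y hy => hu _ ⟨by linarith [hy.2], by linarith [hy.1]⟩)
      (1 - x) ⟨by linarith [hx.2], by linarith⟩
    simpa using this

lemma Sol.main {ε lam : ℝ} {u u' u'' : ℝ → ℝ} (h : 0 < ε) (h2 : ε < 1/2)
    (hs : Sol ε lam u u' u'') (hne : ∃ x ∈ Icc (0:ℝ) 1, u x ≠ 0) :
    (0 < ∫ x in (x0 ε)..(1 - x0 ε), wfun ε x * (u x)^2) ∧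
          lam = (∫ x in (x0 ε)..(1 - x0 ε), pfun ε x * (u' x)^2) /
                (∫ x in (x0 ε)..(1 - x0 ε), wfun ε x * (u x)^2) ∧
          0 ≤ lam := by
  have h3 := x0_lt h
  have h4 := x0_pos h
  obtain ⟨i1, i2, id⟩ := hs.ident h h2
  have sub : Ioo (x0 ε) (1 - x0 ε) ⊆ Icc 0 1 := by
    rintro x ⟨a, b⟩; constructor <;> linarith
  have pos : 0 < ∫ x in (x0 ε)..(1 - x0 ε), wfun ε x * (u x)^2 := by
    obtain ⟨z, hz, hzu⟩ : ∃ z ∈ Ioo (x0 ε) (1 - x0 ε), u z ≠ 0 := by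
      by_contra! hc
      obtain ⟨x, hx, hxu⟩ := hne
      exact hxu (hs.zero h h2 hc x hx)
    have cu : ContinuousOn u (Ioo (x0 ε) (1 - x0 ε)) :=
      fun x hx => (hs.1 x (sub hx)).continuousAt.continuousWithinAt
    refine int_pos hz ((wfun_cont h h2).mul (cu.pow 2)) i1 ?_ ?_
    · intro x hx; exact mul_nonneg (wfun_pos h h2 hx).le (sq_nonneg _)
    · exact mul_pos (wfun_pos h h2 hz) (by positivity)
  have eq : lam = (∫ x in (x0 ε)..(1 - x0 ε), pfun ε x * (u' x)^2) /
                (∫ x in (x0 ε)..(1 - x0 ε), wfun ε x * (u x)^2) := by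
    rw [eq_div_iff pos.ne']; exact id.symm
  refine ⟨pos, eq, ?_⟩
  rw [eq]
  refine div_nonneg ?_ pos.le
  apply intervalIntegral.integral_nonneg_of_ae_restrict (by linarith)
  rw [Filter.EventuallyLE, ae_restrict_iff' measurableSet_Icc]
  have hb : ∀ᵐ x : ℝ, x ≠ 1 - x0 ε := by simp [ae_iff]
  have ha : ∀ᵐ x : ℝ, x ≠ x0 ε := by simp [ae_iff]
  filter_upwards [ha, hb] with x hxa hxb hx
  exact mul_nonneg (pfun_pos h h2 ⟨lt_of_le_of_ne hx.1 hxa.symm, lt_of_le_of_ne hx.2 hxb⟩).le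
    (sq_nonneg _)

lemma Sol.const {ε : ℝ} {u u' u'' : ℝ → ℝ} (h : 0 < ε) (h2 : ε < 1/2)
    (hs : Sol ε 0 u u' u'') : ∀ x ∈ Icc (0:ℝ) 1, u x = u (1/2) := by
  have h3 := x0_lt h
  have h4 := x0_pos h
  obtain ⟨i1, i2, id⟩ := hs.ident h h2
  have sub : Ioo (x0 ε) (1 - x0 ε) ⊆ Icc 0 1 := by
    rintro x ⟨a, b⟩; constructor <;> linarith
  have hz : ∀ x ∈ Ioo (x0 ε) (1 - x0 ε), u' x = 0 := by
    by_contra! hc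
    obtain ⟨z, hz, hzu⟩ := hc
    have cu : ContinuousOn u' (Ioo (x0 ε) (1 - x0 ε)) :=
      fun x hx => (hs.2.1 x (sub hx)).continuousAt.continuousWithinAt
    have := int_pos hz (((pfun_cont h h2).mono Ioo_subset_Icc_self).mul (cu.pow 2)) i2
      (fun x hx => mul_nonneg (pfun_pos h h2 hx).le (sq_nonneg _))
      (mul_pos (pfun_pos h h2 hz) (by positivity : 0 < (u' z)^2))
    rw [zero_mul] at id
    exact this.ne' id
  have hm : (1/2 : ℝ) ∈ Ioo (x0 ε) (1 - x0 ε) := ⟨by linarith, by linarith⟩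
  have hc : ∀ x ∈ Ioo (x0 ε) (1 - x0 ε), u x - u (1/2) = 0 := by
    intro x hx
    have := (convex_Ioo (x0 ε) (1 - x0 ε)).is_const_of_fderivWithin_eq_zero (𝕜 := ℝ) (f := u)
      (fun y hy => (hs.1 y (sub hy)).differentiableAt.differentiableWithinAt)
      (fun y hy => by
        rw [fderivWithin_of_isOpen isOpen_Ioo hy]
        ext
        have := (hs.1 y (sub hy)).deriv
        rw [hz y hy] at this
        simpa using this) hx hm
    linarith
  have hs' : Sol ε 0 (fun x => u x - u (1/2)) u' u'' :=
    ⟨fun x hx => (hs.1 x hx).sub_const _, hs.2.1, fun x hx => by simpa using hs.2.2 x hx⟩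
  intro x hx
  have := hs'.zero h h2 hc x hx
  linarith

theorem stmt8 :
    ∃ ε₀ > (0:ℝ), ∀ ε : ℝ, 0 < ε → ε ≤ ε₀ →
      (∀ (lam : ℝ) (u u' u'' : ℝ → ℝ),
        (∀ x ∈ Icc (0:ℝ) 1, HasDerivAt u (u' x) x) →
        (∀ x ∈ Icc (0:ℝ) 1, HasDerivAt u' (u'' x) x) →
        ContinuousOn u'' (Icc 0 1) →
        (∀ x ∈ Icc (0:ℝ) 1, phi2 ε x * u'' x + phi1 ε x * u' x = lam * u x) →
        (∃ x ∈ Icc (0:ℝ) 1, u x ≠ 0) →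
        (0 < ∫ x in (x0 ε)..(1 - x0 ε), wfun ε x * (u x)^2) ∧
          lam = (∫ x in (x0 ε)..(1 - x0 ε), pfun ε x * (u' x)^2) /
                (∫ x in (x0 ε)..(1 - x0 ε), wfun ε x * (u x)^2) ∧
          0 ≤ lam) ∧
      (∃ u u' u'' : ℝ → ℝ,
        (∀ x ∈ Icc (0:ℝ) 1, HasDerivAt u (u' x) x) ∧
        (∀ x ∈ Icc (0:ℝ) 1, HasDerivAt u' (u'' x) x) ∧
        ContinuousOn u'' (Icc 0 1) ∧
        (∀ x ∈ Icc (0:ℝ) 1, phi2 ε x * u'' x + phi1 ε x * u' x = 0) ∧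
        (∃ x ∈ Icc (0:ℝ) 1, u x ≠ 0)) ∧
      (∀ (u u' u'' : ℝ → ℝ),
        (∀ x ∈ Icc (0:ℝ) 1, HasDerivAt u (u' x) x) →
        (∀ x ∈ Icc (0:ℝ) 1, HasDerivAt u' (u'' x) x) →
        ContinuousOn u'' (Icc 0 1) →
        (∀ x ∈ Icc (0:ℝ) 1, phi2 ε x * u'' x + phi1 ε x * u' x = 0) →
        ∀ x ∈ Icc (0:ℝ) 1, ∀ y ∈ Icc (0:ℝ) 1, u x = u y) := by
  refine ⟨1/4, by norm_num, fun ε h hle => ?_⟩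
  have h2 : ε < 1/2 := by linarith
  refine ⟨?_, ?_, ?_⟩
  · intro lam u u' u'' hu hu' _ heq hne
    exact Sol.main h h2 ⟨hu, hu', heq⟩ hne
  · refine ⟨fun _ => 1, fun _ => 0, fun _ => 0, fun x _ => hasDerivAt_const _ _,
      fun x _ => hasDerivAt_const _ _, continuousOn_const, fun x _ => by simp, 0, by simp, by simp⟩
  · intro u u' u'' hu hu' _ heq x hx y hy
    have hs : Sol ε 0 u u' u'' := ⟨hu, hu', fun x hx => by rw [heq x hx, zero_mul]⟩
    rw [hs.const h h2 x hx, hs.const h h2 y hy]
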